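/- Let Z, X be Polish spaces, μ ∈ P(Z), and (P_z)_{z∈Z} a Feller system of probability measures on X. Define ψ(F) = ∫_Z log(∫_X e^{F(z,x)} P_z(dx)) μ(dz) for F ∈ C_b(Z×X) and ψ*(q) = sup_{F∈C_b(Z×X)} {⟨F,q⟩ − ψ(F)} for q in the dual of C_b(Z×X). Then ψ*(q) < +∞ implies that q is (represented by) a Borel probability measure on Z×X with Z-marginal equal to μ, and for such q, ψ*(q) = ∫_Z H(q^z | P_z) μ(dz) = H(q | μ⊗P_·). -/

import Mathlib

open MeasureTheory ProbabilityTheory Classical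
open scoped ENNReal BoundedContinuousFunction

/-- Relative entropy `H(Q|P) = ∫ log(dQ/dP) dQ` if `Q ≪ P` (and the log-likelihood
ratio is integrable), `+∞` otherwise. -/
noncomputable def relEntropy {α : Type*} [MeasurableSpace α] (Q P : Measure α) : ℝ≥0∞ :=
  if Q ≪ P ∧ Integrable (llr Q P) Q then ENNReal.ofReal (∫ x, llr Q P x ∂Q) else ⊤

/-!
Write `p = μ ⊗ P`. If `ψ*(q) ≤ C`, then `log x ≤ x - 1` gives `q F ≤ C + ∫ (exp F - 1) dp` for every
bounded continuous `F`. Testing with `-t F` for `F ≥ 0` and large `t` shows that `q` is positive, so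
by the Riesz theorem it is a measure `ρ` on the Stone–Čech compactification. The inequality extends
to bounded measurable functions, and testing with `t 1_A` for `p`-null `A` shows that `ρ` is
absolutely continuous with respect to the image of `p`; hence its density pulls back to `Z × X` and
`q` is a measure `m ≪ p` there. Functions of `z` alone pin down the marginal of `m`.

Testing with truncations of `log (dm/dp)` gives `H(m | p) ≤ ψ*(q)`. Conversely, subtracting from `F`
its conditional log-Laplace transform `L` does not change `∫ F dm - ψ(F)` and makes
`∫ (exp (F - L) - 1) dp` vanish, so `ψ*(q) ≤ H(m | p)` follows from the Fenchel–Young inequality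
`x a ≤ (x log x + 1 - x) + (exp a - 1)`.
-/

open Set Filter Topology InformationTheory

theorem nonpos_of_forall_nonneg_mul_le {a C : ℝ} (h : ∀ t, 0 ≤ t → t * a ≤ C) : a ≤ 0 := by
  by_contra! ha
  have hC : 0 ≤ C := by simpa using h 0 le_rfl
  have := h ((C + 1) / a) (by positivity)
  rw [div_mul_cancel₀ _ ha.ne'] at this
  linarith

theorem eq_zero_of_forall_mul_le {a C : ℝ} (h : ∀ t, t * a ≤ C) : a = 0 :=
  le_antisymm (nonpos_of_forall_nonneg_mul_le fun t _ ↦ h t) <|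
    neg_nonpos.mp <| nonpos_of_forall_nonneg_mul_le fun t _ ↦ by simpa using h (-t)

theorem integrable_exp_of_abs_le {Y : Type*} [MeasurableSpace Y] {p : Measure Y}
    [IsFiniteMeasure p] {F : Y → ℝ} (hF : Measurable F) {M : ℝ} (hM : ∀ y, |F y| ≤ M) :
    Integrable (fun y ↦ Real.exp (F y)) p :=
  .of_bound hF.exp.aestronglyMeasurable (Real.exp M) <| .of_forall fun y ↦ by
    simpa using (le_abs_self _).trans (hM y)

/-! ### Bounded measurable test functions -/

theorem weaklyRegular_map {Y B : Type*} [TopologicalSpace Y] [HereditarilyLindelofSpace Y]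
    [MeasurableSpace Y] [OpensMeasurableSpace Y] [TopologicalSpace B] [RegularSpace B]
    [MeasurableSpace B] [BorelSpace B] (p : Measure Y) [IsFiniteMeasure p] {u : Y → B}
    (hu : Continuous u) : (p.map u).WeaklyRegular := by
  refine Measure.InnerRegularWRT.weaklyRegular_of_finite _ fun U hU r hr ↦ ?_
  have hN : ∀ y ∈ u ⁻¹' U, ∃ N ∈ 𝓝 (u y), IsClosed N ∧ N ⊆ U := fun y hy ↦
    exists_mem_nhds_isClosed_subset (hU.mem_nhds hy)
  choose! N hN_nhds hN_closed hN_sub using hN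
  obtain ⟨t, ht, htU, ht_cover⟩ :=
    (HereditarilyLindelofSpace.isLindelof (u ⁻¹' U)).elim_nhds_subcover
      (fun y ↦ u ⁻¹' N y) fun y hy ↦ hu.continuousAt (hN_nhds y hy)
  have : Countable t := ht.to_subtype
  let K : Finset t → Set B := fun I ↦ ⋃ y ∈ I, N y
  have hK_closed (I : Finset t) : IsClosed (K I) :=
    isClosed_biUnion_finset fun y _ ↦ hN_closed y (htU y y.2)
  have hK_mono : Monotone fun I ↦ u ⁻¹' K I := fun I J hIJ ↦
    preimage_mono (biUnion_subset_biUnion_left hIJ)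
  have hK_cover : u ⁻¹' U ⊆ ⋃ I, u ⁻¹' K I := fun y hy ↦ by
    obtain ⟨i, hi, hyi⟩ := mem_iUnion₂.mp (ht_cover hy)
    exact mem_iUnion.mpr ⟨{⟨i, hi⟩}, by simpa [K, hi] using hyi⟩
  have hr' : r < ⨆ I, p.map u (K I) := by
    simp_rw [Measure.map_apply hu.measurable (hK_closed _).measurableSet]
    rw [← hK_mono.directed_le.measure_iUnion]
    exact (Measure.map_apply hu.measurable hU.measurableSet ▸ hr).trans_le (measure_mono hK_cover)
  obtain ⟨I, hI⟩ := lt_iSup_iff.mp hr'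
  exact ⟨K I, iUnion₂_subset fun y _ ↦ hN_sub y (htU y y.2), hK_closed I, hI⟩

theorem weaklyRegular_add {Y : Type*} [TopologicalSpace Y] [MeasurableSpace Y] [BorelSpace Y]
    (m p : Measure Y) [IsFiniteMeasure m] [IsFiniteMeasure p] [m.WeaklyRegular] [p.WeaklyRegular] :
    (m + p).WeaklyRegular := by
  refine Measure.InnerRegularWRT.weaklyRegular_of_finite _ fun U hU r hr ↦ ?_
  let ε := ((m + p) U - r) / 2
  have hε : ε ≠ 0 := (ENNReal.half_pos (tsub_pos_iff_lt.mpr hr).ne').ne'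
  obtain ⟨F, hFU, hF, hmF⟩ := Measure.WeaklyRegular.innerRegular.exists_subset_lt_add
    isClosed_empty hU (measure_ne_top m U) hε
  obtain ⟨G, hGU, hG, hpG⟩ := Measure.WeaklyRegular.innerRegular.exists_subset_lt_add
    isClosed_empty hU (measure_ne_top p U) hε
  refine ⟨F ∪ G, union_subset hFU hGU, hF.union hG, lt_of_add_lt_add_right (a := ε + ε) ?_⟩
  calc r + (ε + ε) = (m + p) U := by rw [ENNReal.add_halves, add_tsub_cancel_of_le hr.le]
    _ = m U + p U := rfl
    _ < (m F + ε) + (p G + ε) := ENNReal.add_lt_add hmF hpG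
    _ = m F + p G + (ε + ε) := by ring
    _ ≤ (m + p) (F ∪ G) + (ε + ε) := by
      rw [Measure.add_apply]
      gcongr
      exacts [subset_union_left, subset_union_right]

theorem exists_seq_boundedContinuous_tendsto_ae {Y : Type*} [TopologicalSpace Y] [NormalSpace Y]
    [MeasurableSpace Y] [BorelSpace Y] (ν : Measure Y) [IsFiniteMeasure ν] [ν.WeaklyRegular]
    {F : Y → ℝ} (hF : Measurable F) {M : ℝ} (hM : ∀ y, |F y| ≤ M) :
    ∃ G : ℕ → Y →ᵇ ℝ, (∀ n y, |G n y| ≤ M) ∧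
      ∀ᵐ y ∂ν, Tendsto (fun n ↦ G n y) atTop (𝓝 (F y)) := by
  obtain hY | ⟨⟨y₀⟩⟩ := isEmpty_or_nonempty Y
  · exact ⟨0, fun _ y ↦ isEmptyElim y, .of_forall fun y ↦ isEmptyElim y⟩
  have hM₀ : 0 ≤ M := (abs_nonneg _).trans (hM y₀)
  have hF_memLp : MemLp F 1 ν := .of_bound hF.aestronglyMeasurable M (.of_forall hM)
  have happrox (n : ℕ) : ∃ g : Y →ᵇ ℝ, eLpNorm (F - ⇑g) 1 ν ≤ (n : ℝ≥0∞)⁻¹ ∧ MemLp g 1 ν :=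
    hF_memLp.exists_boundedContinuous_eLpNorm_sub_le ENNReal.one_ne_top (by simp)
  choose g hg hg_memLp using happrox
  have hg_lim : Tendsto (fun n ↦ eLpNorm (⇑(g n) - F) 1 ν) atTop (𝓝 0) := by
    simp_rw [eLpNorm_sub_comm _ F]
    exact tendsto_of_tendsto_of_tendsto_of_le_of_le tendsto_const_nhds
      ENNReal.tendsto_inv_nat_nhds_zero (fun _ ↦ zero_le) hg
  obtain ⟨ns, -, hns⟩ := (tendstoInMeasure_of_tendsto_eLpNorm one_ne_zero
    (fun n ↦ (hg_memLp n).1) hF.aestronglyMeasurable hg_lim).exists_seq_tendsto_ae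
  let c : Y →ᵇ ℝ := .const Y M
  refine ⟨fun n ↦ -c ⊔ c ⊓ g (ns n), fun n y ↦ ?_, ?_⟩
  · exact abs_le.mpr ⟨le_sup_left, sup_le (neg_le_self hM₀) inf_le_left⟩
  · filter_upwards [hns] with y hy
    have := tendsto_const_nhds (x := -M).max (tendsto_const_nhds (x := M).min hy)
    simpa [c, max_eq_right (abs_le.mp (hM y)).1, min_eq_right (abs_le.mp (hM y)).2] using this

theorem integral_le_add_integral_exp_sub_one_of_boundedContinuous {Y : Type*} [TopologicalSpace Y]
    [NormalSpace Y] [MeasurableSpace Y] [BorelSpace Y] {m p : Measure Y} [IsFiniteMeasure m]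
    [IsFiniteMeasure p] [m.WeaklyRegular] [p.WeaklyRegular] {C : ℝ}
    (hC : ∀ G : Y →ᵇ ℝ, ∫ y, G y ∂m ≤ C + ∫ y, (Real.exp (G y) - 1) ∂p)
    {F : Y → ℝ} (hF : Measurable F) {M : ℝ} (hM : ∀ y, |F y| ≤ M) :
    ∫ y, F y ∂m ≤ C + ∫ y, (Real.exp (F y) - 1) ∂p := by
  have := weaklyRegular_add m p
  obtain ⟨G, hGM, hG⟩ := exists_seq_boundedContinuous_tendsto_ae (m + p) hF hM
  obtain ⟨hGm, hGp⟩ := ae_add_measure_iff.mp hG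
  have hlim_m : Tendsto (fun n ↦ ∫ y, G n y ∂m) atTop (𝓝 (∫ y, F y ∂m)) :=
    tendsto_integral_of_dominated_convergence (fun _ ↦ M)
      (fun n ↦ (G n).continuous.aestronglyMeasurable) (integrable_const M)
      (fun n ↦ .of_forall (hGM n)) hGm
  have hlim_p : Tendsto (fun n ↦ ∫ y, (Real.exp (G n y) - 1) ∂p) atTop
      (𝓝 (∫ y, (Real.exp (F y) - 1) ∂p)) := by
    refine tendsto_integral_of_dominated_convergence (fun _ ↦ Real.exp M + 1)
      (fun n ↦ by fun_prop) (integrable_const _) (fun n ↦ .of_forall fun y ↦ ?_) ?_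
    · refine (norm_sub_le _ _).trans ?_
      simpa using (le_abs_self _).trans (hGM n y)
    · filter_upwards [hGp] with y hy using (hy.rexp).sub_const 1
  exact le_of_tendsto_of_tendsto' hlim_m (hlim_p.const_add C) fun n ↦ hC (G n)

/-! ### Relative entropy -/

theorem relEntropy_eq_klDiv {α : Type*} [MeasurableSpace α] {Q P : Measure α}
    [IsProbabilityMeasure Q] [IsProbabilityMeasure P] : relEntropy Q P = klDiv Q P := by
  simp [relEntropy, klDiv_def]

-- The Fenchel–Young inequality: `a ↦ exp a - 1` is the convex conjugate of `klFun` on `[0, ∞)`.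
theorem mul_le_klFun_add_exp_sub_one {x : ℝ} (hx : 0 ≤ x) (a : ℝ) :
    x * a ≤ klFun x + (Real.exp a - 1) := by
  rw [klFun_apply]
  rcases hx.eq_or_lt with rfl | hx
  · simpa using (Real.exp_pos a).le
  · have hexp : Real.exp a = x * Real.exp (a - Real.log x) := by
      rw [Real.exp_sub, Real.exp_log hx, mul_div_cancel₀ _ hx.ne']
    have := mul_le_mul_of_nonneg_left (Real.add_one_le_exp (a - Real.log x)) hx.le
    rw [hexp]
    linarith

theorem integral_le_toReal_klDiv_add_integral_exp_sub_one {Y : Type*} [MeasurableSpace Y]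
    {m p : Measure Y} [IsFiniteMeasure m] [IsFiniteMeasure p] (hkl : klDiv m p ≠ ∞) {F : Y → ℝ}
    (hF : Measurable F) {M : ℝ} (hM : ∀ y, |F y| ≤ M) :
    ∫ y, F y ∂m ≤ (klDiv m p).toReal + ∫ y, (Real.exp (F y) - 1) ∂p := by
  obtain ⟨hac, hllr⟩ := klDiv_ne_top_iff.mp hkl
  have hklFun := (integrable_klFun_rnDeriv_iff hac).mpr hllr
  have hexp : Integrable (fun y ↦ Real.exp (F y) - 1) p :=
    (integrable_exp_of_abs_le hF hM).sub (integrable_const 1)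
  rw [toReal_klDiv_eq_integral_klFun hac, ← integral_rnDeriv_smul hac, ← integral_add hklFun hexp]
  exact integral_mono
    (Measure.integrable_toReal_rnDeriv.mul_bdd hF.aestronglyMeasurable (.of_forall hM))
    (hklFun.add hexp) fun y ↦ mul_le_klFun_add_exp_sub_one ENNReal.toReal_nonneg (F y)

/-- The logarithm of `x`, truncated to `[-n, n]`. The truncation is applied to `x` and not to
`Real.log x`, so that `x = 0` is sent to `-n` in spite of `Real.log 0 = 0`. -/
noncomputable def truncLog (n x : ℝ) : ℝ :=
  Real.log (max (Real.exp (-n)) (min (Real.exp n) x))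

theorem exp_truncLog (n x : ℝ) :
    Real.exp (truncLog n x) = max (Real.exp (-n)) (min (Real.exp n) x) :=
  Real.exp_log (lt_max_of_lt_left (Real.exp_pos _))

theorem measurable_truncLog (n : ℝ) : Measurable (truncLog n) := by
  unfold truncLog
  fun_prop

theorem abs_truncLog_le {n : ℝ} (hn : 0 ≤ n) (x : ℝ) : |truncLog n x| ≤ n := by
  rw [abs_le, ← Real.exp_le_exp, ← Real.exp_le_exp (y := n), exp_truncLog]
  exact ⟨le_max_left _ _, max_le (Real.exp_le_exp.mpr (neg_le_self hn)) (min_le_left _ _)⟩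

/-- The approximation of `klFun x = x * log x + 1 - x` in which `log x` is replaced by
`truncLog n x` and the subtracted `x` by `Real.exp (truncLog n x)`. Its integral at `x = dm/dp` is
`∫ F dm - ∫ (exp F - 1) dp` for the test function `F = truncLog n (dm/dp)`. -/
noncomputable def truncKLFun (n x : ℝ) : ℝ :=
  x * truncLog n x + 1 - Real.exp (truncLog n x)

theorem measurable_truncKLFun (n : ℝ) : Measurable (truncKLFun n) := by
  have := measurable_truncLog n
  unfold truncKLFun
  fun_prop

theorem truncKLFun_nonneg {n : ℝ} (hn : 0 ≤ n) (x : ℝ) : 0 ≤ truncKLFun n x := by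
  -- With `y = exp (truncLog n x)`, `truncKLFun n x = klFun y + log y * (x - y)`.
  have hkl : 0 ≤ Real.exp (truncLog n x) * truncLog n x + 1 - Real.exp (truncLog n x) := by
    simpa [klFun_apply] using klFun_nonneg (Real.exp_pos (truncLog n x)).le
  have hmono : 0 ≤ truncLog n x * (x - Real.exp (truncLog n x)) := by
    have hexp : Real.exp (-n) ≤ Real.exp n := Real.exp_le_exp.mpr (neg_le_self hn)
    rw [exp_truncLog, truncLog]
    rcases le_total x (Real.exp (-n)) with hx | hx
    · rw [min_eq_right (hx.trans hexp), max_eq_left hx, Real.log_exp]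
      exact mul_nonneg_of_nonpos_of_nonpos (neg_nonpos.mpr hn) (sub_nonpos.mpr hx)
    · rcases le_total x (Real.exp n) with hx' | hx'
      · simp [min_eq_right hx', max_eq_right hx]
      · rw [min_eq_left hx', max_eq_right hexp, Real.log_exp]
        exact mul_nonneg hn (sub_nonneg.mpr hx')
  rw [truncKLFun]
  linarith

theorem tendsto_truncKLFun {x : ℝ} (hx : 0 ≤ x) :
    Tendsto (fun n : ℕ ↦ truncKLFun n x) atTop (𝓝 (klFun x)) := by
  have hexp : Tendsto (fun n : ℕ ↦ Real.exp (truncLog n x)) atTop (𝓝 x) := by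
    simp_rw [exp_truncLog]
    have hpos : Tendsto (fun n : ℕ ↦ Real.exp n) atTop atTop :=
      Real.tendsto_exp_atTop.comp tendsto_natCast_atTop_atTop
    have hmin : Tendsto (fun n : ℕ ↦ min (Real.exp n) x) atTop (𝓝 x) :=
      tendsto_const_nhds.congr' <| by
        filter_upwards [hpos.eventually_ge_atTop x] with n hn using (min_eq_right hn).symm
    have hneg : Tendsto (fun n : ℕ ↦ Real.exp (-n)) atTop (𝓝 0) :=
      Real.tendsto_exp_neg_atTop_nhds_zero.comp tendsto_natCast_atTop_atTop
    simpa [hx] using hneg.max hmin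
  have hmul : Tendsto (fun n : ℕ ↦ x * truncLog n x) atTop (𝓝 (x * Real.log x)) := by
    rcases eq_or_ne x 0 with rfl | hx₀
    · simp
    · simpa using (hexp.log hx₀).const_mul x
  rw [klFun_apply]
  exact (hmul.add_const 1).sub hexp

section KLDivBound

variable {Y : Type*} [MeasurableSpace Y] {m p : Measure Y} [IsFiniteMeasure m] {C : ℝ}
  (hC : ∀ ⦃F : Y → ℝ⦄ ⦃M : ℝ⦄, Measurable F → (∀ y, |F y| ≤ M) →
    ∫ y, F y ∂m ≤ C + ∫ y, (Real.exp (F y) - 1) ∂p)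

include hC

theorem absolutelyContinuous_of_integral_le_integral_exp : m ≪ p := by
  refine .mk fun A hA hpA ↦ ?_
  have hmA (t : ℝ) (ht : 0 ≤ t) : t * m.real A ≤ C := by
    have hexp : ∫ y, (Real.exp (A.indicator (fun _ ↦ t) y) - 1) ∂p = 0 := by
      refine integral_eq_zero_of_ae ?_
      filter_upwards [measure_eq_zero_iff_ae_notMem.mp hpA] with y hy
      simp [hy]
    have := hC (measurable_const.indicator hA) (F := A.indicator fun _ ↦ t) (M := t) fun y ↦ by
      by_cases hy : y ∈ A <;> simp [hy, abs_of_nonneg ht, ht]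
    rw [hexp, add_zero, integral_indicator_const _ hA, smul_eq_mul] at this
    linarith
  exact (measureReal_eq_zero_iff).mp <|
    (nonpos_of_forall_nonneg_mul_le hmA).antisymm measureReal_nonneg

theorem lintegral_truncKLFun_rnDeriv_le [IsFiniteMeasure p] {n : ℝ} (hn : 0 ≤ n) :
    ∫⁻ y, ENNReal.ofReal (truncKLFun n (m.rnDeriv p y).toReal) ∂p ≤ ENNReal.ofReal C := by
  set f : Y → ℝ := fun y ↦ (m.rnDeriv p y).toReal
  have hF : Measurable fun y ↦ truncLog n (f y) :=
    (measurable_truncLog n).comp (Measure.measurable_rnDeriv m p).ennreal_toReal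
  have hF_le (y : Y) : |truncLog n (f y)| ≤ n := abs_truncLog_le hn _
  have hfF : Integrable (fun y ↦ f y * truncLog n (f y)) p :=
    Measure.integrable_toReal_rnDeriv.mul_bdd hF.aestronglyMeasurable (.of_forall hF_le)
  have hexp : Integrable (fun y ↦ Real.exp (truncLog n (f y))) p :=
    integrable_exp_of_abs_le hF hF_le
  have hexp_sub : Integrable (fun y ↦ Real.exp (truncLog n (f y)) - 1) p :=
    hexp.sub (integrable_const 1)
  have hint : Integrable (fun y ↦ truncKLFun n (f y)) p := (hfF.add (integrable_const 1)).sub hexp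
  rw [← ofReal_integral_eq_lintegral_ofReal hint
    (.of_forall fun y ↦ truncKLFun_nonneg hn _)]
  refine ENNReal.ofReal_le_ofReal ?_
  calc ∫ y, truncKLFun n (f y) ∂p
      = ∫ y, f y * truncLog n (f y) ∂p - ∫ y, (Real.exp (truncLog n (f y)) - 1) ∂p := by
        rw [← integral_sub hfF hexp_sub]
        congr with y
        rw [truncKLFun]
        ring
    _ = ∫ y, truncLog n (f y) ∂m - ∫ y, (Real.exp (truncLog n (f y)) - 1) ∂p := by
        rw [← integral_rnDeriv_smul (absolutelyContinuous_of_integral_le_integral_exp hC)]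
        rfl
    _ ≤ C := sub_le_iff_le_add.mpr (hC hF hF_le)

theorem klDiv_le_of_integral_le_integral_exp [IsFiniteMeasure p] :
    klDiv m p ≤ ENNReal.ofReal C := by
  rw [klDiv_eq_lintegral_klFun_of_ac (absolutelyContinuous_of_integral_le_integral_exp hC)]
  set f : Y → ℝ := fun y ↦ (m.rnDeriv p y).toReal
  have hf_meas : Measurable f := (Measure.measurable_rnDeriv m p).ennreal_toReal
  calc ∫⁻ y, ENNReal.ofReal (klFun (f y)) ∂p
      = ∫⁻ y, liminf (fun n : ℕ ↦ ENNReal.ofReal (truncKLFun n (f y))) atTop ∂p :=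
        lintegral_congr fun y ↦ (ENNReal.tendsto_ofReal
          (tendsto_truncKLFun ENNReal.toReal_nonneg)).liminf_eq.symm
    _ ≤ liminf (fun n : ℕ ↦ ∫⁻ y, ENNReal.ofReal (truncKLFun n (f y)) ∂p) atTop :=
        lintegral_liminf_le fun n ↦ ((measurable_truncKLFun n).comp hf_meas).ennreal_ofReal
    _ ≤ liminf (fun _ : ℕ ↦ ENNReal.ofReal C) atTop :=
        liminf_le_liminf <| .of_forall fun n ↦
          lintegral_truncKLFun_rnDeriv_le hC n.cast_nonneg
    _ = ENNReal.ofReal C := by simp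

end KLDivBound

/-! ### Functionals on bounded continuous functions as measures -/

theorem exists_regular_forall_integral_eq_of_nonneg {B : Type*} [TopologicalSpace B] [T2Space B]
    [CompactSpace B] [MeasurableSpace B] [BorelSpace B] (Λ : C(B, ℝ) →ₗ[ℝ] ℝ)
    (hΛ : ∀ f, 0 ≤ f → 0 ≤ Λ f) :
    ∃ ρ : Measure B, ρ.Regular ∧ IsFiniteMeasure ρ ∧ ∀ f, Λ f = ∫ b, f b ∂ρ := by
  let Λ' : CompactlySupportedContinuousMap B ℝ →ₚ[ℝ] ℝ := .mk₀
    { toFun f := Λ f.toContinuousMap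
      map_add' f g := map_add Λ f.toContinuousMap g.toContinuousMap
      map_smul' c f := map_smul Λ c f.toContinuousMap }
    fun f hf ↦ hΛ f.toContinuousMap hf
  exact ⟨RealRMK.rieszMeasure Λ', inferInstance, inferInstance, fun f ↦
    (RealRMK.integral_rieszMeasure Λ' (.continuousMapEquiv f)).symm⟩

theorem exists_isFiniteMeasure_map_eq_of_absolutelyContinuous {Y B : Type*}
    [MeasurableSpace Y] [MeasurableSpace B] {p : Measure Y} [IsFiniteMeasure p] {ρ : Measure B}
    [IsFiniteMeasure ρ] {u : Y → B} (hu : Measurable u) (hρ : ρ ≪ p.map u) :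
    ∃ m : Measure Y, IsFiniteMeasure m ∧ m.map u = ρ := by
  have hmap : (p.withDensity (ρ.rnDeriv (p.map u) ∘ u)).map u = ρ := by
    conv_rhs => rw [← Measure.withDensity_rnDeriv_eq ρ _ hρ]
    ext s hs
    rw [Measure.map_apply hu hs, withDensity_apply _ (hu hs), withDensity_apply _ hs,
      setLIntegral_map hs (Measure.measurable_rnDeriv _ _) hu]
    rfl
  refine ⟨_, ⟨?_⟩, hmap⟩
  rw [← preimage_univ (f := u), ← Measure.map_apply hu .univ, hmap]
  exact measure_lt_top ρ univ

/-- Restriction to `Y` of continuous functions on the Stone–Čech compactification of `Y`. -/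
noncomputable def stoneCechRestrict (Y : Type*) [TopologicalSpace Y] :
    C(StoneCech Y, ℝ) →ₗ[ℝ] (Y →ᵇ ℝ) where
  toFun G := (BoundedContinuousFunction.mkOfCompact G).compContinuous
    ⟨stoneCechUnit, continuous_stoneCechUnit⟩
  map_add' _ _ := rfl
  map_smul' _ _ := rfl

@[simp]
theorem stoneCechRestrict_apply {Y : Type*} [TopologicalSpace Y] (G : C(StoneCech Y, ℝ)) (y : Y) :
    stoneCechRestrict Y G y = G (stoneCechUnit y) :=
  rfl

theorem stoneCechRestrict_surjective (Y : Type*) [TopologicalSpace Y] :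
    Function.Surjective (stoneCechRestrict Y) := fun F ↦ by
  have hF : Continuous fun y ↦
      (⟨F y, abs_le.mp (F.norm_coe_le_norm y)⟩ : Icc (-‖F‖) ‖F‖) :=
    F.continuous.subtype_mk _
  refine ⟨⟨Subtype.val ∘ stoneCechExtend hF,
    continuous_subtype_val.comp (continuous_stoneCechExtend hF)⟩, ?_⟩
  ext y
  simp

theorem map_nonneg_of_le_integral_exp {Y : Type*} [TopologicalSpace Y]
    [MeasurableSpace Y] {p : Measure Y} {q : (Y →ᵇ ℝ) →ₗ[ℝ] ℝ} {C : ℝ}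
    (hq : ∀ F, q F ≤ C + ∫ y, (Real.exp (F y) - 1) ∂p) {F : Y →ᵇ ℝ} (hF : 0 ≤ F) : 0 ≤ q F := by
  refine neg_nonpos.mp <| nonpos_of_forall_nonneg_mul_le (C := C) fun t ht ↦ ?_
  have hexp : ∫ y, (Real.exp ((t • -F) y) - 1) ∂p ≤ 0 := integral_nonpos fun y ↦ by
    simpa using mul_nonneg ht (hF y)
  calc t * -q F = q (t • -F) := by simp
    _ ≤ C + ∫ y, (Real.exp ((t • -F) y) - 1) ∂p := hq _
    _ ≤ C := by linarith

theorem exists_forall_eq_integral_of_le_integral_exp {Y : Type*} [TopologicalSpace Y]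
    [HereditarilyLindelofSpace Y] [MeasurableSpace Y] [OpensMeasurableSpace Y] {p : Measure Y}
    [IsFiniteMeasure p] {q : (Y →ᵇ ℝ) →ₗ[ℝ] ℝ} {C : ℝ}
    (hq : ∀ F, q F ≤ C + ∫ y, (Real.exp (F y) - 1) ∂p) :
    ∃ m : Measure Y, IsFiniteMeasure m ∧ ∀ F, q F = ∫ y, F y ∂m := by
  borelize (StoneCech Y)
  have hu : Continuous (stoneCechUnit : Y → StoneCech Y) := continuous_stoneCechUnit
  obtain ⟨ρ, _, _, hρ⟩ := exists_regular_forall_integral_eq_of_nonneg (q ∘ₗ stoneCechRestrict Y)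
    fun G hG ↦ map_nonneg_of_le_integral_exp hq fun y ↦ hG (stoneCechUnit y)
  have hG (G : StoneCech Y →ᵇ ℝ) :
      ∫ b, G b ∂ρ ≤ C + ∫ b, (Real.exp (G b) - 1) ∂(p.map stoneCechUnit) := by
    rw [integral_map hu.aemeasurable (by fun_prop)]
    exact hρ G ▸ hq (stoneCechRestrict Y G)
  -- `StoneCech Y` is in general not metrizable, so this is not automatic.
  have := weaklyRegular_map p hu
  obtain ⟨m, hm, rfl⟩ := exists_isFiniteMeasure_map_eq_of_absolutelyContinuous hu.measurable <|
    absolutelyContinuous_of_integral_le_integral_exp fun F M hF hM ↦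
      integral_le_add_integral_exp_sub_one_of_boundedContinuous hG hF hM
  refine ⟨m, hm, fun F ↦ ?_⟩
  obtain ⟨G, rfl⟩ := stoneCechRestrict_surjective Y F
  exact (hρ G).trans (integral_map hu.aemeasurable (by fun_prop))

/-! ### Disintegration and relative entropy of `μ ⊗ κ` with respect to `μ ⊗ P` -/

theorem ae_apply_univ_eq_one_of_compProd_eq {Z X : Type*} [MeasurableSpace Z] [MeasurableSpace X]
    {m : Measure (Z × X)} [IsFiniteMeasure m] {κ : Kernel Z X} [IsSFiniteKernel κ]
    (h : m.fst ⊗ₘ κ = m) : ∀ᵐ z ∂m.fst, κ z univ = 1 := by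
  refine ae_eq_of_forall_setLIntegral_eq_of_sigmaFinite (κ.measurable_coe .univ) measurable_const
    fun A hA _ ↦ ?_
  calc ∫⁻ z in A, κ z univ ∂m.fst = (m.fst ⊗ₘ κ) (A ×ˢ univ) :=
        (Measure.compProd_apply_prod hA .univ).symm
    _ = ∫⁻ _ in A, 1 ∂m.fst := by
        rw [h, setLIntegral_one, Measure.fst_apply hA, prod_univ]

theorem exists_isMarkovKernel_compProd_eq_of_absolutelyContinuous {Z X : Type*}
    [MeasurableSpace Z] [MeasurableSpace X] {m : Measure (Z × X)} [IsFiniteMeasure m]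
    {P : Kernel Z X} [IsMarkovKernel P] (hac : m ≪ m.fst ⊗ₘ P) :
    ∃ κ : Kernel Z X, IsMarkovKernel κ ∧ m.fst ⊗ₘ κ = m := by
  let f : Z → X → NNReal := fun z x ↦ (m.rnDeriv (m.fst ⊗ₘ P) (z, x)).toNNReal
  have hf : Measurable fun y : Z × X ↦ (f y.1 y.2 : ℝ≥0∞) :=
    (Measure.measurable_rnDeriv _ _).ennreal_toNNReal.coe_nnreal_ennreal
  let κ := P.withDensity fun z x ↦ (f z x : ℝ≥0∞)
  have hκ : m.fst ⊗ₘ κ = m := by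
    rw [Measure.compProd_withDensity hf]
    conv_rhs => rw [← Measure.withDensity_rnDeriv_eq m _ hac]
    refine withDensity_congr_ae ?_
    filter_upwards [Measure.rnDeriv_lt_top m (m.fst ⊗ₘ P)] with y hy
    exact ENNReal.coe_toNNReal hy.ne
  have hS : MeasurableSet {z | κ z univ = 1} :=
    measurableSet_eq_fun (κ.measurable_coe .univ) measurable_const
  refine ⟨Kernel.piecewise hS κ P, ⟨fun z ↦ ?_⟩, ?_⟩
  · rw [Kernel.piecewise_apply]
    split_ifs with hz
    · exact ⟨hz⟩
    · infer_instance
  · conv_rhs => rw [← hκ]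
    refine Measure.compProd_congr ?_
    filter_upwards [ae_apply_univ_eq_one_of_compProd_eq hκ] with z hz
    exact (Kernel.piecewise_apply z).trans (if_pos hz)

section ChainRule

variable {Z X : Type*} [MeasurableSpace Z] [MeasurableSpace X]
  [MeasurableSpace.CountableOrCountablyGenerated Z X] {μ : Measure Z} [IsFiniteMeasure μ]
  {κ P : Kernel Z X} [IsFiniteKernel κ] [IsFiniteKernel P]

theorem rnDeriv_compProd_of_absolutelyContinuous (hac : ∀ᵐ z ∂μ, κ z ≪ P z) :
    (μ ⊗ₘ κ).rnDeriv (μ ⊗ₘ P) =ᵐ[μ ⊗ₘ P] fun y ↦ Kernel.rnDeriv κ P y.1 y.2 := by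
  have hmeas := Kernel.measurable_rnDeriv κ P
  have hκ : μ ⊗ₘ κ = (μ ⊗ₘ P).withDensity fun y ↦ Kernel.rnDeriv κ P y.1 y.2 := by
    rw [← Measure.compProd_withDensity hmeas]
    refine Measure.compProd_congr ?_
    filter_upwards [hac] with z hz
    rw [Kernel.withDensity_apply _ hmeas, withDensity_congr_ae Kernel.rnDeriv_eq_rnDeriv_measure,
      Measure.withDensity_rnDeriv_eq _ _ hz]
  rw [hκ]
  exact Measure.rnDeriv_withDensity _ hmeas

theorem klDiv_compProd_right_eq_lintegral (hac : μ ⊗ₘ κ ≪ μ ⊗ₘ P) :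
    klDiv (μ ⊗ₘ κ) (μ ⊗ₘ P) = ∫⁻ z, klDiv (κ z) (P z) ∂μ := by
  have hac_z := Measure.absolutelyContinuous_compProd_right_iff.mp hac
  calc klDiv (μ ⊗ₘ κ) (μ ⊗ₘ P)
      = ∫⁻ y, ENNReal.ofReal (klFun ((μ ⊗ₘ κ).rnDeriv (μ ⊗ₘ P) y).toReal) ∂(μ ⊗ₘ P) :=
        klDiv_eq_lintegral_klFun_of_ac hac
    _ = ∫⁻ y, ENNReal.ofReal (klFun (Kernel.rnDeriv κ P y.1 y.2).toReal) ∂(μ ⊗ₘ P) := by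
        refine lintegral_congr_ae ?_
        filter_upwards [rnDeriv_compProd_of_absolutelyContinuous hac_z] with y hy using by rw [hy]
    _ = ∫⁻ z, ∫⁻ x, ENNReal.ofReal (klFun (Kernel.rnDeriv κ P z x).toReal) ∂(P z) ∂μ :=
        Measure.lintegral_compProd <| (measurable_klFun.comp
          (Kernel.measurable_rnDeriv κ P).ennreal_toReal).ennreal_ofReal
    _ = ∫⁻ z, klDiv (κ z) (P z) ∂μ := by
        refine lintegral_congr_ae ?_
        filter_upwards [hac_z] with z hz
        rw [klDiv_eq_lintegral_klFun_of_ac hz]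
        refine lintegral_congr_ae ?_
        filter_upwards [Kernel.rnDeriv_eq_rnDeriv_measure (κ := κ) (η := P) (a := z)] with x hx
        rw [hx]

end ChainRule

/-! ### The convex conjugate of the integrated log-Laplace transform -/

/-- The convex conjugate of `ψ : E → ℝ` at the linear functional `q`. Linear functionals are not
required to be continuous. -/
noncomputable def convexConjugate {E : Type*} [AddCommGroup E] [Module ℝ E] (ψ : E → ℝ)
    (q : E →ₗ[ℝ] ℝ) : EReal :=
  ⨆ F, ((q F - ψ F : ℝ) : EReal)

theorem convexConjugate_le_coe_iff {E : Type*} [AddCommGroup E] [Module ℝ E] {ψ : E → ℝ}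
    {q : E →ₗ[ℝ] ℝ} {C : ℝ} : convexConjugate ψ q ≤ C ↔ ∀ F, q F - ψ F ≤ C := by
  simp only [convexConjugate, iSup_le_iff, EReal.coe_le_coe_iff]

theorem exists_convexConjugate_eq_coe {E : Type*} [AddCommGroup E] [Module ℝ E] {ψ : E → ℝ}
    {q : E →ₗ[ℝ] ℝ} (h : convexConjugate ψ q < ⊤) : ∃ C : ℝ, convexConjugate ψ q = C := by
  have hbot : convexConjugate ψ q ≠ ⊥ :=
    ((EReal.bot_lt_coe _).trans_le (le_iSup (fun F ↦ ((q F - ψ F : ℝ) : EReal)) 0)).ne'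
  exact ⟨_, (EReal.coe_toReal h.ne hbot).symm⟩

section LogLaplace

variable {Z X : Type*} [MeasurableSpace Z] [MeasurableSpace X]

/-- The conditional log-Laplace transform `z ↦ log ∫ exp (F (z, x)) P_z(dx)` of `F`. -/
noncomputable def logLaplace (P : Kernel Z X) (F : Z × X → ℝ) (z : Z) : ℝ :=
  Real.log (∫ x, Real.exp (F (z, x)) ∂(P z))

/-- The functional `ψ(F) = ∫ log (∫ exp (F (z, x)) P_z(dx)) μ(dz)`. -/
noncomputable def integralLogLaplace (μ : Measure Z) (P : Kernel Z X) (F : Z × X → ℝ) : ℝ :=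
  ∫ z, logLaplace P F z ∂μ

variable {μ : Measure Z} {P : Kernel Z X} [IsMarkovKernel P] {F : Z × X → ℝ} {M : ℝ}

theorem measurable_logLaplace (hF : Measurable F) : Measurable (logLaplace P F) :=
  (hF.exp.stronglyMeasurable.integral_kernel_prod_right' (κ := P)).measurable.log

theorem exp_logLaplace (hF : Measurable F) (hM : ∀ y, |F y| ≤ M) (z : Z) :
    Real.exp (logLaplace P F z) = ∫ x, Real.exp (F (z, x)) ∂(P z) :=
  Real.exp_log <| integral_exp_pos <|
    integrable_exp_of_abs_le (hF.comp measurable_prodMk_left) fun x ↦ hM (z, x)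

theorem abs_logLaplace_le (hF : Measurable F) (hM : ∀ y, |F y| ≤ M) (z : Z) :
    |logLaplace P F z| ≤ M := by
  have hexp : Integrable (fun x ↦ Real.exp (F (z, x))) (P z) :=
    integrable_exp_of_abs_le (hF.comp measurable_prodMk_left) fun x ↦ hM (z, x)
  rw [abs_le, ← Real.exp_le_exp, ← Real.exp_le_exp (y := M), exp_logLaplace hF hM]
  constructor
  · simpa using integral_mono (integrable_const _) hexp fun x ↦
      Real.exp_le_exp.mpr (abs_le.mp (hM (z, x))).1
  · simpa using integral_mono hexp (integrable_const _) fun x ↦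
      Real.exp_le_exp.mpr (abs_le.mp (hM (z, x))).2

theorem logLaplace_sub_logLaplace_fst (hF : Measurable F) (hM : ∀ y, |F y| ≤ M) (z : Z) :
    logLaplace P (fun y ↦ F y - logLaplace P F y.1) z = 0 := by
  rw [logLaplace]
  simp_rw [Real.exp_sub, integral_div]
  rw [← exp_logLaplace hF hM, div_self (Real.exp_ne_zero _), Real.log_one]

theorem integral_exp_sub_one_compProd [IsFiniteMeasure μ] (hF : Measurable F)
    (hM : ∀ y, |F y| ≤ M) :
    ∫ y, (Real.exp (F y) - 1) ∂(μ ⊗ₘ P) = ∫ z, (Real.exp (logLaplace P F z) - 1) ∂μ := by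
  have hexp_sub : Integrable (fun y ↦ Real.exp (F y) - 1) (μ ⊗ₘ P) :=
    (integrable_exp_of_abs_le hF hM).sub (integrable_const 1)
  rw [Measure.integral_compProd hexp_sub]
  congr with z
  have hexp : Integrable (fun x ↦ Real.exp (F (z, x))) (P z) :=
    integrable_exp_of_abs_le (hF.comp measurable_prodMk_left) fun x ↦ hM (z, x)
  simp [integral_sub hexp (integrable_const 1), exp_logLaplace hF hM]

theorem integralLogLaplace_le_integral_exp_sub_one [IsFiniteMeasure μ] (hF : Measurable F)
    (hM : ∀ y, |F y| ≤ M) :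
    integralLogLaplace μ P F ≤ ∫ y, (Real.exp (F y) - 1) ∂(μ ⊗ₘ P) := by
  have hL : Measurable (logLaplace P F) := measurable_logLaplace hF
  have hLM : ∀ z, |logLaplace P F z| ≤ M := abs_logLaplace_le hF hM
  rw [integral_exp_sub_one_compProd hF hM]
  exact integral_mono (.of_bound hL.aestronglyMeasurable M (.of_forall hLM))
    ((integrable_exp_of_abs_le hL hLM).sub (integrable_const 1))
    fun z ↦ le_sub_iff_add_le.mpr (Real.add_one_le_exp _)

theorem integral_sub_integralLogLaplace_le_toReal_klDiv {m : Measure (Z × X)} [IsFiniteMeasure m]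
    (hkl : klDiv m (m.fst ⊗ₘ P) ≠ ∞) (hF : Measurable F) (hM : ∀ y, |F y| ≤ M) :
    ∫ y, F y ∂m - integralLogLaplace m.fst P F ≤ (klDiv m (m.fst ⊗ₘ P)).toReal := by
  have hL : Measurable (logLaplace P F) := measurable_logLaplace hF
  have hL_fst : Measurable fun y : Z × X ↦ logLaplace P F y.1 := hL.comp measurable_fst
  have hLM : ∀ z, |logLaplace P F z| ≤ M := abs_logLaplace_le hF hM
  have hG : Measurable fun y : Z × X ↦ F y - logLaplace P F y.1 := hF.sub hL_fst
  have hGM (y : Z × X) : |F y - logLaplace P F y.1| ≤ M + M :=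
    (abs_sub _ _).trans (add_le_add (hM y) (hLM y.1))
  have hexp : ∫ y, (Real.exp (F y - logLaplace P F y.1) - 1) ∂(m.fst ⊗ₘ P) = 0 := by
    simp [integral_exp_sub_one_compProd hG hGM, logLaplace_sub_logLaplace_fst hF hM]
  calc ∫ y, F y ∂m - integralLogLaplace m.fst P F
      = ∫ y, (F y - logLaplace P F y.1) ∂m := by
        rw [integral_sub (.of_bound hF.aestronglyMeasurable M (.of_forall hM))
          (.of_bound hL_fst.aestronglyMeasurable M (.of_forall fun y ↦ hLM y.1)),
          integralLogLaplace, Measure.fst,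
          integral_map measurable_fst.aemeasurable hL.aestronglyMeasurable]
    _ ≤ (klDiv m (m.fst ⊗ₘ P)).toReal := by
        simpa [hexp] using integral_le_toReal_klDiv_add_integral_exp_sub_one hkl hG hGM

end LogLaplace

theorem fst_eq_of_forall_integral_sub_integralLogLaplace_le {Z X : Type*} [TopologicalSpace Z]
    [HasOuterApproxClosed Z] [MeasurableSpace Z] [BorelSpace Z] [TopologicalSpace X]
    [MeasurableSpace X] {m : Measure (Z × X)} [IsFiniteMeasure m] {μ : Measure Z}
    [IsFiniteMeasure μ] {P : Kernel Z X} [IsMarkovKernel P] {C : ℝ}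
    (hC : ∀ F : (Z × X) →ᵇ ℝ, ∫ y, F y ∂m - integralLogLaplace μ P F ≤ C) : m.fst = μ := by
  refine ext_of_forall_integral_eq_of_IsFiniteMeasure fun f ↦ ?_
  rw [Measure.fst, integral_map measurable_fst.aemeasurable (by fun_prop), ← sub_eq_zero]
  refine eq_zero_of_forall_mul_le (C := C) fun t ↦ ?_
  simpa [integralLogLaplace, logLaplace, mul_sub, integral_const_mul] using
    hC (t • f.compContinuous ⟨Prod.fst, continuous_fst⟩)

theorem convexConjugate_integralLogLaplace_eq_klDiv {Z X : Type*} [TopologicalSpace Z]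
    [MeasurableSpace Z] [TopologicalSpace X] [MeasurableSpace X] [OpensMeasurableSpace (Z × X)]
    {m : Measure (Z × X)} [IsFiniteMeasure m] {P : Kernel Z X} [IsMarkovKernel P] {C : ℝ}
    {q : ((Z × X) →ᵇ ℝ) →ₗ[ℝ] ℝ} (hqm : ∀ F, q F = ∫ y, F y ∂m)
    (hC : convexConjugate (fun F : (Z × X) →ᵇ ℝ ↦ integralLogLaplace m.fst P F) q = C)
    (hkl : klDiv m (m.fst ⊗ₘ P) ≤ ENNReal.ofReal C) :
    convexConjugate (fun F : (Z × X) →ᵇ ℝ ↦ integralLogLaplace m.fst P F) q =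
      klDiv m (m.fst ⊗ₘ P) := by
  have hkl_ne_top : klDiv m (m.fst ⊗ₘ P) ≠ ∞ := ne_top_of_le_ne_top ENNReal.ofReal_ne_top hkl
  rw [← EReal.coe_ennreal_toReal hkl_ne_top]
  refine le_antisymm (convexConjugate_le_coe_iff.mpr fun F ↦ ?_) ?_
  · rw [hqm]
    exact integral_sub_integralLogLaplace_le_toReal_klDiv hkl_ne_top F.continuous.measurable
      F.norm_coe_le_norm
  · have hC₀ : 0 ≤ C := by
      simpa [integralLogLaplace, logLaplace] using convexConjugate_le_coe_iff.mp hC.le 0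
    rw [hC]
    exact EReal.coe_le_coe (ENNReal.toReal_le_of_le_ofReal hC₀ hkl)

theorem stmt15_general {Z X : Type*}
    [TopologicalSpace Z] [RegularSpace Z] [SecondCountableTopology Z]
    [MeasurableSpace Z] [BorelSpace Z]
    [TopologicalSpace X] [RegularSpace X] [SecondCountableTopology X]
    [MeasurableSpace X] [BorelSpace X]
    (μ : Measure Z) [IsProbabilityMeasure μ] (P : Kernel Z X) [IsMarkovKernel P]
    (q : ((Z × X) →ᵇ ℝ) →ₗ[ℝ] ℝ)
    (hfin : convexConjugate (fun F : (Z × X) →ᵇ ℝ ↦ integralLogLaplace μ P F) q < ⊤) :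
    ∃ (m : Measure (Z × X)) (κ : Kernel Z X), IsProbabilityMeasure m ∧ IsMarkovKernel κ ∧
      (∀ F : (Z × X) →ᵇ ℝ, q F = ∫ p, F p ∂m) ∧
      m.fst = μ ∧ m = μ ⊗ₘ κ ∧
      convexConjugate (fun F : (Z × X) →ᵇ ℝ ↦ integralLogLaplace μ P F) q =
        relEntropy m (μ ⊗ₘ P) ∧
      relEntropy m (μ ⊗ₘ P) = ∫⁻ z, relEntropy (κ z) (P z) ∂μ := by
  obtain ⟨C, hC⟩ := exists_convexConjugate_eq_coe hfin
  have hq_sub (F) : q F - integralLogLaplace μ P F ≤ C := convexConjugate_le_coe_iff.mp hC.le F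
  have hq (F : (Z × X) →ᵇ ℝ) : q F ≤ C + ∫ y, (Real.exp (F y) - 1) ∂(μ ⊗ₘ P) := by
    have := integralLogLaplace_le_integral_exp_sub_one (μ := μ) (P := P) F.continuous.measurable
      F.norm_coe_le_norm
    linarith [hq_sub F]
  obtain ⟨m, _, hqm⟩ := exists_forall_eq_integral_of_le_integral_exp hq
  obtain rfl : m.fst = μ :=
    fst_eq_of_forall_integral_sub_integralLogLaplace_le fun F ↦ hqm F ▸ hq_sub F
  have hkl : klDiv m (m.fst ⊗ₘ P) ≤ ENNReal.ofReal C :=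
    klDiv_le_of_integral_le_integral_exp fun F M hF hM ↦
      integral_le_add_integral_exp_sub_one_of_boundedContinuous (fun G ↦ hqm G ▸ hq G) hF hM
  have hac : m ≪ m.fst ⊗ₘ P :=
    (klDiv_ne_top_iff.mp (ne_top_of_le_ne_top ENNReal.ofReal_ne_top hkl)).1
  obtain ⟨κ, _, hκ⟩ := exists_isMarkovKernel_compProd_eq_of_absolutelyContinuous hac
  have hm : IsProbabilityMeasure m := ⟨by rw [← Measure.fst_univ, measure_univ]⟩
  refine ⟨m, κ, hm, inferInstance, hqm, rfl, hκ.symm, ?_, ?_⟩ <;> simp only [relEntropy_eq_klDiv]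
  · exact convexConjugate_integralLogLaplace_eq_klDiv hqm hC hkl
  · simpa only [hκ] using
      klDiv_compProd_right_eq_lintegral (κ := κ) (P := P) (μ := m.fst) (by rwa [hκ])

/-- Lemma `res-202`: with `ψ(F) = ∫_Z log ∫_X e^{F(z,x)} P_z(dx) μ(dz)` on `C_b(Z×X)`,
any continuous linear functional `q` on `C_b(Z×X)` with `ψ*(q) < ∞` is represented by a
Borel probability measure on `Z×X` with `Z`-marginal `μ`, disintegrated by a Markov
kernel `κ`, and `ψ*(q) = H(q | μ⊗P) = ∫_Z H(q^z|P_z) μ(dz)`. -/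
theorem stmt15 {Z X : Type*}
    [MetricSpace Z] [CompleteSpace Z] [TopologicalSpace.SeparableSpace Z]
    [MeasurableSpace Z] [BorelSpace Z]
    [MetricSpace X] [CompleteSpace X] [TopologicalSpace.SeparableSpace X]
    [MeasurableSpace X] [BorelSpace X]
    (μ : Measure Z) [IsProbabilityMeasure μ]
    (P : Kernel Z X) [IsMarkovKernel P]
    (hFeller : ∀ f : X →ᵇ ℝ, Continuous fun z => ∫ x, f x ∂(P z))
    (q : ((Z × X) →ᵇ ℝ) →L[ℝ] ℝ)
    (hfin : (⨆ F : (Z × X) →ᵇ ℝ,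
        (((q F - ∫ z, Real.log (∫ x, Real.exp (F (z, x)) ∂(P z)) ∂μ : ℝ)) : EReal)) < ⊤) :
    ∃ (m : Measure (Z × X)) (κ : Kernel Z X), IsProbabilityMeasure m ∧ IsMarkovKernel κ ∧
      (∀ F : (Z × X) →ᵇ ℝ, q F = ∫ p, F p ∂m) ∧
      m.fst = μ ∧ m = μ.compProd κ ∧
      (⨆ F : (Z × X) →ᵇ ℝ,
          (((q F - ∫ z, Real.log (∫ x, Real.exp (F (z, x)) ∂(P z)) ∂μ : ℝ)) : EReal))
        = (relEntropy m (μ.compProd P) : EReal) ∧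
      relEntropy m (μ.compProd P) = ∫⁻ z, relEntropy (κ z) (P z) ∂μ := by
  have := UniformSpace.secondCountable_of_separable Z
  have := UniformSpace.secondCountable_of_separable X
  exact stmt15_general μ P (q : ((Z × X) →ᵇ ℝ) →ₗ[ℝ] ℝ) hfin
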